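/- Let K be a field of characteristic p with A-field structure ψ such that ψ(T) has infinite multiplicative order in K. For each k ≥ 1, define ψ_k: F_q[T] → K by ψ_k(Σa_iT^i) = Σψ(a_i)ψ(T)^{ki} and the corresponding Carlitz module φ_k(T) = ψ_k(T) + τ ∈ K{τ}. Then for k ≠ l, φ_k(F_q[T]) ∩ φ_l(F_q[T]) = F_q (identifying F_q with its image in K ⊆ K{τ}). -/

import Mathlib

/-- Multiplication in the twisted polynomial ring `K{τ}` (with `τ a = a^q τ`). -/
noncomputable def tmul {K : Type*} [Field K] (q : ℕ) (f g : ℕ →₀ K) : ℕ →₀ K :=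
  f.sum fun i a => g.sum fun j b => Finsupp.single (i + j) (a * b ^ q ^ i)

/-- Powers in the twisted polynomial ring. -/
noncomputable def tpow {K : Type*} [Field K] (q : ℕ) (x : ℕ →₀ K) : ℕ → (ℕ →₀ K)
  | 0 => Finsupp.single 0 1
  | n + 1 => tmul q x (tpow q x n)

/-- The Carlitz module with `A`-field structure sending `T ↦ t`:
`φ(∑ aᵢ T^i) = ∑ e(aᵢ) (t + τ)^i`. -/
noncomputable def carlitz {Fq K : Type*} [Field Fq] [Field K] (q : ℕ) (e : Fq →+* K)
    (t : K) (f : Polynomial Fq) : ℕ →₀ K :=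
  f.sum fun i a => e a • tpow q (Finsupp.single 0 t + Finsupp.single 1 1) i

/-!
Comparing `τ`-degrees shows that `φ_k(f) = φ_l(g)` forces `deg f = deg g`. Comparing constant
coefficients gives `f(t ^ k) = g(t ^ l)`. An element algebraic over a finite field has only finitely
many powers, so `t` is transcendental and this is an identity `f(X ^ k) = g(X ^ l)` of polynomials,
whence `k * deg f = l * deg g`. As `k ≠ l`, both degrees vanish.
-/

open Polynomial

section Transcendental

theorem natDegree_mul_eq_of_aeval_pow_eq {R A : Type*} [CommRing R] [Ring A] [Algebra R A] {t : A}
    (ht : Transcendental R t) {k l : ℕ} {f g : R[X]} (h : aeval (t ^ k) f = aeval (t ^ l) g) :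
    f.natDegree * k = g.natDegree * l := by
  have hexpand : expand R k f = expand R l g :=
    transcendental_iff_injective.mp ht <| by rw [expand_aeval, expand_aeval, h]
  rw [← natDegree_expand, hexpand, natDegree_expand]

theorem transcendental_of_injective_pow {F A : Type*} [Field F] [Finite F] [Ring A] [Algebra F A]
    {t : A} (ht : Function.Injective fun n : ℕ => t ^ n) : Transcendental F t := by
  intro halg
  have : Module.Finite F (Algebra.adjoin F {t}) :=
    Algebra.finite_adjoin_simple_of_isIntegral halg.isIntegral
  have : Finite (Algebra.adjoin F {t}) := Module.finite_of_finite F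
  let x : Algebra.adjoin F {t} := ⟨t, Algebra.self_mem_adjoin_singleton F t⟩
  exact not_injective_infinite_finite (fun n : ℕ => x ^ n)
    fun _ _ hab => ht (congrArg Subtype.val hab)

end Transcendental

section TwistedPolynomial

variable {K : Type*} [Field K]

/-- The degree in `τ` of a twisted polynomial, from which `deg f` can be read off `φ(f)`. As for
`Polynomial.natDegree`, the zero polynomial has degree `0`. -/
def tauDegree (x : ℕ →₀ K) : ℕ := x.support.sup id

theorem tmul_add_left (q : ℕ) (f₁ f₂ g : ℕ →₀ K) :
    tmul q (f₁ + f₂) g = tmul q f₁ g + tmul q f₂ g := by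
  refine Finsupp.sum_add_index' (fun i => ?_) fun i a b => ?_
  · simp
  · simp only [add_mul, Finsupp.single_add, Finsupp.sum_add]

theorem tmul_single_left (q i : ℕ) (a : K) (g : ℕ →₀ K) :
    tmul q (Finsupp.single i a) g =
      g.sum fun j b => Finsupp.single (i + j) (a * b ^ q ^ i) :=
  Finsupp.sum_single_index (by simp)

theorem tmul_single_zero_left (q : ℕ) (a : K) (g : ℕ →₀ K) :
    tmul q (Finsupp.single 0 a) g = a • g := by
  simp only [tmul_single_left, zero_add, pow_zero, pow_one, ← smul_eq_mul, ← Finsupp.smul_single,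
    ← Finsupp.smul_sum, Finsupp.sum_single]

theorem tmul_single_left_apply_add {q : ℕ} (hq : q ≠ 0) (i : ℕ) (a : K) (g : ℕ →₀ K) (n : ℕ) :
    tmul q (Finsupp.single i a) g (i + n) = a * g n ^ q ^ i := by
  rw [tmul_single_left, Finsupp.sum_apply, Finsupp.sum_eq_single n]
  · rw [Finsupp.single_eq_same]
  · intro j _ hj
    exact Finsupp.single_eq_of_ne (by omega)
  · simp [hq]

theorem tmul_single_left_apply_of_lt (q : ℕ) {i n : ℕ} (h : n < i) (a : K) (g : ℕ →₀ K) :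
    tmul q (Finsupp.single i a) g n = 0 := by
  rw [tmul_single_left, Finsupp.sum_apply]
  exact Finset.sum_eq_zero fun j _ => Finsupp.single_eq_of_ne (by omega)

/-- The value `φ(T) = t + τ` of the Carlitz module at `T`, whose powers make up `carlitz`. It is
reducible so that it matches the expression inlined in the definition of `carlitz`. -/
noncomputable abbrev carlitzT (t : K) : ℕ →₀ K := Finsupp.single 0 t + Finsupp.single 1 1

theorem tmul_carlitzT_apply_zero (q : ℕ) (t : K) (g : ℕ →₀ K) :
    tmul q (carlitzT t) g 0 = t * g 0 := by
  rw [tmul_add_left, Finsupp.add_apply, tmul_single_left_apply_of_lt q one_pos, add_zero,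
    tmul_single_zero_left, Finsupp.smul_apply, smul_eq_mul]

theorem tmul_carlitzT_apply_succ {q : ℕ} (hq : q ≠ 0) (t : K) (g : ℕ →₀ K) (n : ℕ) :
    tmul q (carlitzT t) g (n + 1) = t * g (n + 1) + g n ^ q := by
  have hτ : tmul q (Finsupp.single 1 1) g (n + 1) = g n ^ q := by
    rw [add_comm n, tmul_single_left_apply_add hq, one_mul, pow_one]
  rw [tmul_add_left, Finsupp.add_apply, hτ, tmul_single_zero_left, Finsupp.smul_apply, smul_eq_mul]

theorem tpow_carlitzT_apply_zero (q : ℕ) (t : K) (i : ℕ) :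
    tpow q (carlitzT t) i 0 = t ^ i := by
  induction i with
  | zero => rw [tpow, Finsupp.single_eq_same, pow_zero]
  | succ i ih => rw [tpow, tmul_carlitzT_apply_zero, ih, pow_succ']

theorem tpow_carlitzT_apply_of_lt {q : ℕ} (hq : q ≠ 0) (t : K) {i n : ℕ} (h : i < n) :
    tpow q (carlitzT t) i n = 0 := by
  induction i generalizing n with
  | zero => rw [tpow, Finsupp.single_eq_of_ne h.ne']
  | succ i ih =>
    cases n with
    | zero => omega
    | succ n =>
      rw [tpow, tmul_carlitzT_apply_succ hq, ih (by omega), ih (by omega), mul_zero, zero_add,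
        zero_pow hq]

theorem tpow_carlitzT_apply_self {q : ℕ} (hq : q ≠ 0) (t : K) (i : ℕ) :
    tpow q (carlitzT t) i i = 1 := by
  induction i with
  | zero => rw [tpow, Finsupp.single_eq_same]
  | succ i ih =>
    rw [tpow, tmul_carlitzT_apply_succ hq, tpow_carlitzT_apply_of_lt hq t i.lt_succ_self, ih,
      mul_zero, zero_add, one_pow]

end TwistedPolynomial

section Carlitz

variable {F K : Type*} [Field F] [Field K]

theorem carlitz_C (q : ℕ) (e : F →+* K) (t : K) (c : F) :
    carlitz q e t (C c) = Finsupp.single 0 (e c) := by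
  rw [carlitz, sum_C_index (by rw [map_zero, zero_smul]), tpow, Finsupp.smul_single_one]

theorem carlitz_apply (q : ℕ) (e : F →+* K) (t : K) (f : F[X]) (n : ℕ) :
    carlitz q e t f n = f.sum fun i a => e a * tpow q (carlitzT t) i n :=
  Finsupp.finsetSum_apply ..

theorem carlitz_apply_zero (q : ℕ) (e : F →+* K) (t : K) (f : F[X]) :
    carlitz q e t f 0 = f.eval₂ e t := by
  simp only [carlitz_apply, tpow_carlitzT_apply_zero, eval₂_eq_sum]

theorem carlitz_apply_of_natDegree_lt {q : ℕ} (hq : q ≠ 0) (e : F →+* K) (t : K) {f : F[X]}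
    {n : ℕ} (h : f.natDegree < n) : carlitz q e t f n = 0 := by
  rw [carlitz_apply, Polynomial.sum_def]
  refine Finset.sum_eq_zero fun i hi => ?_
  rw [tpow_carlitzT_apply_of_lt hq t ((le_natDegree_of_mem_supp i hi).trans_lt h), mul_zero]

theorem carlitz_apply_natDegree {q : ℕ} (hq : q ≠ 0) (e : F →+* K) (t : K) (f : F[X]) :
    carlitz q e t f f.natDegree = e f.leadingCoeff := by
  rw [carlitz_apply, Polynomial.sum_def, Finset.sum_eq_single f.natDegree]
  · rw [tpow_carlitzT_apply_self hq, mul_one, coeff_natDegree]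
  · intro i hi hne
    rw [tpow_carlitzT_apply_of_lt hq t ((le_natDegree_of_mem_supp i hi).lt_of_ne hne), mul_zero]
  · intro hnot
    rw [notMem_support_iff.mp hnot, map_zero, zero_mul]

theorem tauDegree_carlitz {q : ℕ} (hq : q ≠ 0) (e : F →+* K) (t : K) (f : F[X]) :
    tauDegree (carlitz q e t f) = f.natDegree := by
  apply le_antisymm
  · refine Finset.sup_le fun n hn => ?_
    contrapose! hn
    exact Finsupp.notMem_support_iff.mpr (carlitz_apply_of_natDegree_lt hq e t hn)
  · obtain rfl | hf := eq_or_ne f 0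
    · exact Nat.zero_le _
    · have hlead : carlitz q e t f f.natDegree ≠ 0 := by
        rw [carlitz_apply_natDegree hq]
        exact (map_ne_zero e).mpr (leadingCoeff_ne_zero.mpr hf)
      exact Finset.le_sup (f := id) (Finsupp.mem_support_iff.mpr hlead)

theorem natDegree_eq_zero_of_carlitz_pow_eq [Algebra F K] {q : ℕ} (hq : q ≠ 0) {t : K}
    (ht : Transcendental F t) {k l : ℕ} (hkl : k ≠ l) {f g : F[X]}
    (h : carlitz q (algebraMap F K) (t ^ k) f = carlitz q (algebraMap F K) (t ^ l) g) :
    f.natDegree = 0 := by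
  have hdeg : f.natDegree = g.natDegree := by
    rw [← tauDegree_carlitz hq (algebraMap F K) (t ^ k), h, tauDegree_carlitz hq]
  have hconst : aeval (t ^ k) f = aeval (t ^ l) g := by
    rw [aeval_def, aeval_def, ← carlitz_apply_zero q, h, carlitz_apply_zero]
  have hmul : f.natDegree * k = f.natDegree * l := by
    rw [natDegree_mul_eq_of_aeval_pow_eq ht hconst, hdeg]
  exact (mul_eq_mul_left_iff.mp hmul).resolve_left hkl

theorem stmt15_general [Algebra F K] {q : ℕ} (hq : q ≠ 0) {t : K} (ht : Transcendental F t)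
    {k l : ℕ} (hkl : k ≠ l) :
    Set.range (carlitz q (algebraMap F K) (t ^ k)) ∩
        Set.range (carlitz q (algebraMap F K) (t ^ l)) =
      {f : ℕ →₀ K | ∃ c : F, f = Finsupp.single 0 (algebraMap F K c)} := by
  ext x
  constructor
  · rintro ⟨⟨f, rfl⟩, ⟨g, hg⟩⟩
    have hf : f.natDegree = 0 := natDegree_eq_zero_of_carlitz_pow_eq hq ht hkl hg.symm
    obtain ⟨c, rfl⟩ := natDegree_eq_zero.mp hf
    exact ⟨c, carlitz_C ..⟩
  · rintro ⟨c, rfl⟩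
    exact ⟨⟨C c, carlitz_C ..⟩, ⟨C c, carlitz_C ..⟩⟩

end Carlitz

/-- If `ψ(T) = t` has infinite multiplicative order (its powers are pairwise distinct),
then for `k ≠ l` the Carlitz modules `φ_k` with `φ_k(T) = ψ(T)^k + τ` satisfy
`φ_k(F_q[T]) ∩ φ_l(F_q[T]) = F_q` (the constants). -/
theorem stmt15 {Fq K : Type*} [Field Fq] [Fintype Fq] [Field K]
    (p m q : ℕ) (hp : p.Prime) [CharP K p] (hq : q = p ^ m) (hm : 1 ≤ m)
    (hcard : Fintype.card Fq = q) (e : Fq →+* K)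
    (t : K) (ht : Function.Injective fun n : ℕ => t ^ n) :
    ∀ k l : ℕ, 1 ≤ k → 1 ≤ l → k ≠ l →
      Set.range (carlitz q e (t ^ k)) ∩ Set.range (carlitz q e (t ^ l))
        = {f : ℕ →₀ K | ∃ c : Fq, f = Finsupp.single 0 (e c)} := by
  intro k l _ _ hkl
  let _ : Algebra Fq K := e.toAlgebra
  exact stmt15_general (hcard ▸ Fintype.card_ne_zero) (transcendental_of_injective_pow ht) hkl
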